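/- Let q be a prime power and let S_T be a tangent splash of ℓ∞ in PG(2,q³) with centre T. The incidence structure whose points are the q² elements of S_T \ {T}, whose lines are the order-q-sublines of ℓ∞ that contain T and are contained in S_T, and with incidence given by inclusion, is a 2-(q², q, 1) design, that is, an affine plane of order q. -/

import Mathlib

namespace TangentSplashPaper

open Projectivization

/-- The point set of the projective plane `PG(2,K)`. -/
abbrev PGPoint (K : Type*) [Field K] := Projectivization K (Fin 3 → K)

/-- `ℓ` is a line of `PG(2,K)`: the set of points lying in a fixed
2-dimensional linear subspace. -/
def IsLine {K : Type*} [Field K] (ℓ : Set (PGPoint K)) : Prop :=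
  ∃ W : Submodule K (Fin 3 → K), Module.finrank K W = 2 ∧
    ℓ = {P : PGPoint K | P.submodule ≤ W}

/-- The distinguished line `ℓ∞` of `PG(2,K)`: points whose last homogeneous
coordinate vanishes. -/
def linf (K : Type*) [Field K] : Set (PGPoint K) := {P : PGPoint K | P.rep 2 = 0}

/-- The homography of `PG(2,K)` induced by a linear automorphism of `K³`;
as maps of point sets, these are exactly the elements of `PGL(3,K)`. -/
def hmap {K : Type*} [Field K] (f : (Fin 3 → K) ≃ₗ[K] (Fin 3 → K)) :
    PGPoint K → PGPoint K :=
  Projectivization.map f.toLinearMap f.injective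

/-- The base subplane `PG(2,F)`: points admitting homogeneous coordinates in
the subfield `F`. -/
def basePlane (F K : Type*) [Field F] [Field K] [Algebra F K] : Set (PGPoint K) :=
  {P : PGPoint K | ∃ v : Fin 3 → K, ∃ hv : v ≠ 0, P = Projectivization.mk K v hv ∧
    ∀ i, v i ∈ (algebraMap F K).range}

/-- An order-`q`-subplane of `PG(2,K)` (`q = |F|`): an image of `PG(2,F)`
under a homography. -/
def IsSubplane (F : Type*) {K : Type*} [Field F] [Field K] [Algebra F K]
    (S : Set (PGPoint K)) : Prop :=
  ∃ f : (Fin 3 → K) ≃ₗ[K] (Fin 3 → K), S = hmap f '' basePlane F K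

/-- An order-`q`-subline of `PG(2,K)`: the intersection of an order-`q`-subplane
with a line of `PG(2,K)` meeting it in `q+1` points. -/
def IsSubline (F : Type*) {K : Type*} [Field F] [Field K] [Algebra F K] (q : ℕ)
    (b : Set (PGPoint K)) : Prop :=
  ∃ S ℓ : Set (PGPoint K), IsSubplane F S ∧ IsLine ℓ ∧
    (S ∩ ℓ).ncard = q + 1 ∧ b = S ∩ ℓ

/-- The splash of a subplane `π` on `ℓ∞`: all points of `ℓ∞` lying on a line
of `PG(2,K)` spanned by two points of `π`. -/
def splash {K : Type*} [Field K] (π : Set (PGPoint K)) : Set (PGPoint K) :=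
  {X : PGPoint K | X ∈ linf K ∧ ∃ P Q : PGPoint K, P ∈ π ∧ Q ∈ π ∧ P ≠ Q ∧
    ∃ ℓ : Set (PGPoint K), IsLine ℓ ∧ P ∈ ℓ ∧ Q ∈ ℓ ∧ X ∈ ℓ}

/-- `S` is a tangent splash of `ℓ∞` with centre `T`: `S` is the splash of some
order-`q`-subplane meeting `ℓ∞` exactly in the point `T`. -/
def IsTangentSplash (F : Type*) {K : Type*} [Field F] [Field K] [Algebra F K]
    (S : Set (PGPoint K)) (T : PGPoint K) : Prop :=
  ∃ π : Set (PGPoint K), IsSubplane F π ∧ π ∩ linf K = {T} ∧ S = splash π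

/-- The set `t_P`: points of `ℓ∞` lying on the extension of a line of the
subplane `π` through the point `P` (lines of `π` are the lines of `PG(2,K)`
meeting `π` in `q+1` points). -/
def pencilTrace {K : Type*} [Field K] (q : ℕ) (π : Set (PGPoint K))
    (P : PGPoint K) : Set (PGPoint K) :=
  {X : PGPoint K | X ∈ linf K ∧ ∃ ℓ : Set (PGPoint K), IsLine ℓ ∧ P ∈ ℓ ∧
    (π ∩ ℓ).ncard = q + 1 ∧ X ∈ ℓ}

/-!
A point of `ℓ∞` lies on an extended line of a subplane if and only if its coordinates in a frame of
that subplane are `F`-linearly dependent. In a frame whose first vector represents `T`, the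
points of `ℓ∞` other than `T` have coordinates `(s, c, d)` for fixed `c`, `d`, which are
`F`-independent because the subplane is tangent. Hence `S_T \ {T}` is the set of points whose affine
coordinate `s` lies in the `F`-plane `A` spanned by `c` and `d`. The unique subline through `T` and
two such points is the `F`-linear set of an `F`-plane inside the three-dimensional `F`-space whose
linear set is `S_T`, so it stays in `S_T`.
-/

open Module Submodule

open scoped LinearAlgebra.Projectivization Pointwise

section LinearIndependence

variable {F V : Type*} [Field F] [AddCommGroup V] [Module F V]

lemma exists_mem_linearIndependent_pair {U : Submodule F V} (hU : 1 < finrank F U) {x : V}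
    (hx : x ∈ U) (hx0 : x ≠ 0) : ∃ y ∈ U, LinearIndependent F ![x, y] := by
  obtain ⟨y, hy⟩ := exists_linearIndependent_pair_of_one_lt_finrank hU
    (x := (⟨x, hx⟩ : U)) (by simpa using hx0)
  rw [LinearIndependent.pair_iff] at hy
  exact ⟨y, y.2, LinearIndependent.pair_iff.2 fun a c h => hy a c (Subtype.ext h)⟩

lemma exists_mem_linearIndependent_snoc {U : Submodule F V} {n : ℕ} (hU : n < finrank F U)
    {v : Fin n → V} (hv : LinearIndependent F v) :
    ∃ x ∈ U, LinearIndependent F (Fin.snoc v x : Fin (n + 1) → V) := by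
  have hlt : ¬ U ≤ span F (Set.range v) := fun hle => by
    have : FiniteDimensional F (span F (Set.range v)) := .span_of_finite F (Set.finite_range v)
    have hcard := finrank_span_eq_card hv
    rw [Fintype.card_fin] at hcard
    exact (hU.trans_le (finrank_mono hle)).ne' hcard
  obtain ⟨x, hxU, hx⟩ := SetLike.not_le_iff_exists.1 hlt
  exact ⟨x, hxU, linearIndependent_finSnoc.2 ⟨hv, hx⟩⟩

lemma finrank_span_pair_le_two (x y : V) : finrank F (span F {x, y}) ≤ 2 := by
  rw [← Matrix.range_cons_cons_empty x y ![]]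
  exact (finrank_range_le_card _).trans_eq (Fintype.card_fin 2)

lemma span_smul_smul_pair {x y : F} (hx : x ≠ 0) (hy : y ≠ 0) (u v : V) :
    span F {x • u, y • v} = span F {u, v} := by
  simp only [span_insert, span_singleton_smul_eq hx.isUnit, span_singleton_smul_eq hy.isUnit]

lemma linearIndependent_smul_smul_add_pair {x : F} (hx : x ≠ 0) (y : F) {u v : V}
    (h : LinearIndependent F ![u, v]) : LinearIndependent F ![x • u, y • u + v] := by
  have hpair := (LinearIndependent.pair_add_smul_add_smul_iff x 0 y 1).2 ⟨h, by simpa using hx⟩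
  rwa [zero_smul, add_zero, one_smul] at hpair

lemma finrank_span_pair_eq_two {u v : V} (h : LinearIndependent F ![u, v]) :
    finrank F (span F {u, v}) = 2 := by
  rw [← Matrix.range_cons_cons_empty u v ![], finrank_span_eq_card h, Fintype.card_fin]

lemma span_pair_eq_of_finrank_eq_two {W : Submodule F V} (hW : finrank F W = 2) {u v : V}
    (h : LinearIndependent F ![u, v]) (hu : u ∈ W) (hv : v ∈ W) : span F {u, v} = W := by
  have := FiniteDimensional.of_finrank_pos (hW ▸ two_pos : 0 < finrank F W)
  refine eq_of_le_of_finrank_eq (span_le.2 <| Set.pair_subset hu hv) ?_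
  rw [finrank_span_pair_eq_two h, hW]

lemma linearIndependent_pair_iff_mk_ne_mk {u v : V} (hu : u ≠ 0) (hv : v ≠ 0) :
    LinearIndependent F ![u, v] ↔ Projectivization.mk F u hu ≠ Projectivization.mk F v hv := by
  rw [LinearIndependent.pair_iff' hu, ne_comm, ne_eq, Projectivization.mk_eq_mk_iff', not_exists]

lemma linearIndependent_basis_pair {ι : Type*} (b : Basis ι F V) {i j : ι} (hij : i ≠ j) :
    LinearIndependent F ![b i, b j] := by
  have hinj : Function.Injective ![i, j] := List.nodup_ofFn.1 (by simpa using hij)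
  convert b.linearIndependent.comp ![i, j] hinj using 1
  ext k : 1
  fin_cases k <;> rfl

end LinearIndependence

section Frames

variable {F K V ι : Type*} [Field F] [Field K] [Algebra F K] [AddCommGroup V] [Module K V]
  [Module F V] [IsScalarTower F K V]

lemma finrank_span_range_basis [Fintype ι] (b : Basis ι K V) :
    finrank F (span F (Set.range b)) = Fintype.card ι :=
  finrank_eq_card_basis (b.restrictScalars F)

lemma exists_basis_coe_eq_of_mem_span [Finite ι] (b : Basis ι K V) {v : ι → V}
    (hv : LinearIndependent F v) (hmem : ∀ i, v i ∈ span F (Set.range b)) :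
    ∃ b' : Basis ι K V, ⇑b' = v ∧ span F (Set.range b') = span F (Set.range b) := by
  cases nonempty_fintype ι
  have : FiniteDimensional F (span F (Set.range b)) := .span_of_finite F (Set.finite_range b)
  have hspan : span F (Set.range v) = span F (Set.range b) :=
    eq_of_le_of_finrank_eq (span_le.2 <| Set.range_subset_iff.2 hmem) <| by
      rw [finrank_span_eq_card hv, finrank_span_range_basis]
  have htop : ⊤ ≤ span K (Set.range v) := by
    rw [← b.span_eq, span_le]
    exact fun w hw => span_le_restrictScalars F K _ (hspan ▸ subset_span hw)
  have hcoe := coe_basisOfTopLeSpanOfCardEqFinrank v htop (finrank_eq_card_basis b).symm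
  exact ⟨_, hcoe, by rw [hcoe, hspan]⟩

lemma exists_basis_of_linearIndependent_pair (b : Basis (Fin 3) K V) {u v : V}
    (huv : LinearIndependent F ![u, v]) (hu : u ∈ span F (Set.range b))
    (hv : v ∈ span F (Set.range b)) :
    ∃ b' : Basis (Fin 3) K V, b' 0 = u ∧ b' 1 = v ∧
      span F (Set.range b') = span F (Set.range b) := by
  obtain ⟨x, hx, hli⟩ := exists_mem_linearIndependent_snoc (U := span F (Set.range b))
    (by simp [finrank_span_range_basis]) huv
  obtain ⟨b', hb', hspan⟩ := exists_basis_coe_eq_of_mem_span b hli fun i => by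
    fin_cases i <;> assumption
  exact ⟨b', congrFun hb' 0, congrFun hb' 1, hspan⟩

lemma exists_basis_of_ne_zero (b : Basis (Fin 3) K V) {u : V} (hu0 : u ≠ 0)
    (hu : u ∈ span F (Set.range b)) :
    ∃ b' : Basis (Fin 3) K V, b' 0 = u ∧ span F (Set.range b') = span F (Set.range b) := by
  obtain ⟨v, hv, huv⟩ := exists_mem_linearIndependent_pair
    (by simp [finrank_span_range_basis]) hu hu0
  obtain ⟨b', h0, -, hspan⟩ := exists_basis_of_linearIndependent_pair b huv hu hv
  exact ⟨b', h0, hspan⟩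

lemma linearIndependent_pair_of_mem_span_range_basis (b : Basis (Fin 3) K V) {u v : V}
    (huv : LinearIndependent F ![u, v]) (hu : u ∈ span F (Set.range b))
    (hv : v ∈ span F (Set.range b)) : LinearIndependent K ![u, v] := by
  obtain ⟨b', rfl, rfl, -⟩ := exists_basis_of_linearIndependent_pair b huv hu hv
  exact linearIndependent_basis_pair b' (by decide)

lemma span_range_basis_inf_restrictScalars (b : Basis (Fin 3) K V) {W : Submodule K V}
    (hW : W ≠ ⊤) (h0 : b 0 ∈ W) (h1 : b 1 ∈ W) :
    span F (Set.range b) ⊓ W.restrictScalars F = span F {b 0, b 1} := by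
  have h2 : b 2 ∉ W := fun h2 => hW <| top_unique <| by
    rw [← b.span_eq, span_le, Set.range_subset_iff]
    intro i
    fin_cases i <;> assumption
  refine le_antisymm ?_ (span_le.2 <| Set.pair_subset
    ⟨subset_span ⟨0, rfl⟩, h0⟩ ⟨subset_span ⟨1, rfl⟩, h1⟩)
  rintro w ⟨hwU, hwW⟩
  obtain ⟨c, rfl⟩ := (mem_span_range_iff_exists_fun F).1 hwU
  rw [Fin.sum_univ_three] at hwW ⊢
  have h01 : c 0 • b 0 + c 1 • b 1 ∈ W.restrictScalars F :=
    add_mem (smul_mem _ _ h0) (smul_mem _ _ h1)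
  have hc2 : c 2 = 0 := by
    by_contra hc
    exact h2 <| ((W.restrictScalars F).smul_mem_iff hc).1 <|
      ((W.restrictScalars F).add_mem_iff_right h01).1 hwW
  rw [hc2, zero_smul, add_zero]
  exact mem_span_pair.2 ⟨_, _, rfl⟩

lemma one_lt_finrank_span_range_basis_inf_ker (b : Basis (Fin 3) K V) {φ : V →ₗ[K] K}
    (hφ : ∀ i, φ (b i) ∈ Set.range (algebraMap F K)) :
    1 < finrank F ↥(span F (Set.range b) ⊓ (LinearMap.ker φ).restrictScalars F) := by
  set U := span F (Set.range b)
  have hU : finrank F U = 3 := finrank_span_range_basis b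
  have := FiniteDimensional.of_finrank_pos (hU ▸ three_pos : 0 < finrank F U)
  let ψ : U →ₗ[F] K := (φ.restrictScalars F).domRestrict U
  have hrange : LinearMap.range ψ ≤ span F {1} := by
    rw [LinearMap.range_domRestrict, map_span_le]
    rintro _ ⟨i, rfl⟩
    obtain ⟨x, hx⟩ := hφ i
    exact mem_span_singleton.2 ⟨x, by simp [← hx, Algebra.smul_def]⟩
  have hker : U ⊓ (LinearMap.ker φ).restrictScalars F = (LinearMap.ker ψ).map U.subtype := by
    rw [LinearMap.ker_domRestrict, LinearMap.ker_restrictScalars]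
    exact (map_comap_subtype _ _).symm
  have hrange' := (finrank_mono hrange).trans_eq (finrank_span_singleton one_ne_zero)
  have hadd := ψ.finrank_range_add_finrank_ker
  rw [hker, finrank_map_subtype_eq]
  omega

end Frames

section LinearSets

variable {F : Type*} (K : Type*) {V : Type*} [Semiring F] [Field K] [AddCommGroup V]
  [Module K V] [Module F V]

/-- The `F`-linear set of `ℙ K V` defined by an `F`-subspace `U` of `V`: the points with a
representative in `U`. Subplanes, sublines and tangent splashes are all of this form. -/
def linearSet (U : Submodule F V) : Set (ℙ K V) :=
  {X | ∃ w ∈ U, ∃ hw : w ≠ 0, Projectivization.mk K w hw = X}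

variable {K}

lemma mk_mem_linearSet {U : Submodule F V} {w : V} (hw : w ≠ 0) (hwU : w ∈ U) :
    Projectivization.mk K w hw ∈ linearSet K U :=
  ⟨w, hwU, hw, rfl⟩

lemma exists_smul_mem_of_mk_mem_linearSet {U : Submodule F V} {w : V} {hw : w ≠ 0}
    (h : Projectivization.mk K w hw ∈ linearSet K U) : ∃ a : K, a ≠ 0 ∧ a • w ∈ U := by
  obtain ⟨v, hvU, hv, hvw⟩ := h
  obtain ⟨a, rfl⟩ := (Projectivization.mk_eq_mk_iff' K _ _ _ _).1 hvw
  exact ⟨a, left_ne_zero_of_smul hv, hvU⟩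

lemma mk_mem_linearSet_of_smul_mem {U : Submodule F V} {w : V} (hw : w ≠ 0) {a : K}
    (ha : a ≠ 0) (h : a • w ∈ U) : Projectivization.mk K w hw ∈ linearSet K U :=
  ⟨_, h, smul_ne_zero ha hw, (Projectivization.mk_eq_mk_iff' K _ _ _ _).2 ⟨a, rfl⟩⟩

lemma linearSet_mono {U U' : Submodule F V} (h : U ≤ U') : linearSet K U ⊆ linearSet K U' :=
  fun _ ⟨w, hw, hX⟩ => ⟨w, h hw, hX⟩

lemma linearSet_smul [SMulCommClass K F V] {a : K} (ha : a ≠ 0) (U : Submodule F V) :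
    linearSet K (a • U) = linearSet K U := by
  ext X
  constructor
  · rintro ⟨_, ⟨w, hw, rfl⟩, hw0, rfl⟩
    refine mk_mem_linearSet_of_smul_mem hw0 (inv_ne_zero ha) ?_
    simpa [smul_smul, ha] using hw
  · rintro ⟨w, hw, hw0, rfl⟩
    exact mk_mem_linearSet_of_smul_mem hw0 ha (smul_mem_pointwise_smul _ _ _ hw)

lemma mk_submodule_le_iff {W : Submodule K V} {w : V} (hw : w ≠ 0) :
    (Projectivization.mk K w hw).submodule ≤ W ↔ w ∈ W := by
  rw [Projectivization.submodule_mk, span_singleton_le_iff_mem]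

lemma linearSet_inter_setOf_submodule_le [SMul F K] [IsScalarTower F K V] (U : Submodule F V)
    (W : Submodule K V) :
    linearSet K U ∩ {P | P.submodule ≤ W} = linearSet K (U ⊓ W.restrictScalars F) := by
  ext X
  constructor
  · rintro ⟨⟨w, hwU, hw, rfl⟩, hwW⟩
    exact mk_mem_linearSet hw ⟨hwU, (mk_submodule_le_iff hw).1 hwW⟩
  · rintro ⟨w, ⟨hwU, hwW⟩, hw, rfl⟩
    exact ⟨mk_mem_linearSet hw hwU, (mk_submodule_le_iff (K := K) hw).2 hwW⟩

end LinearSets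

section AffinePoints

variable {F K V : Type*} [Field F] [Field K] [Algebra F K] [AddCommGroup V] [Module K V]
  {t m : V}

lemma smul_add_ne_zero (h : LinearIndependent K ![t, m]) (s : K) : s • t + m ≠ 0 := fun h0 =>
  one_ne_zero (h.eq_zero_of_pair (s := s) (t := 1) (by rwa [one_smul])).2

/-- The point with affine coordinate `s` on the projective line spanned by `t` and `m`. -/
def affinePoint (h : LinearIndependent K ![t, m]) (s : K) : ℙ K V :=
  Projectivization.mk K (s • t + m) (smul_add_ne_zero h s)

/-- The only point of the projective line spanned by `t` and `m` that is not an `affinePoint`. -/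
def pointAtInfinity (h : LinearIndependent K ![t, m]) : ℙ K V :=
  Projectivization.mk K t (h.ne_zero 0)

lemma affinePoint_injective (h : LinearIndependent K ![t, m]) :
    Function.Injective (affinePoint h) := by
  intro s s' hss'
  obtain ⟨a, ha⟩ := (Projectivization.mk_eq_mk_iff' K _ _ _ _).1 hss'
  obtain ⟨hs, ha1⟩ := h.eq_zero_of_pair (s := a * s' - s) (t := a - 1)
    (by linear_combination (norm := module) ha)
  linear_combination -hs + s' * ha1

lemma affinePoint_ne_pointAtInfinity (h : LinearIndependent K ![t, m]) (s : K) :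
    affinePoint h s ≠ pointAtInfinity h := by
  intro hst
  obtain ⟨a, ha⟩ := (Projectivization.mk_eq_mk_iff' K _ _ _ _).1 hst
  exact one_ne_zero <| (h.eq_zero_of_pair (s := s - a) (t := 1)
    (by linear_combination (norm := module) -ha)).2

lemma insert_image_affinePoint_sdiff_singleton (h : LinearIndependent K ![t, m]) (A : Set K) :
    insert (pointAtInfinity h) (affinePoint h '' A) \ {pointAtInfinity h} = affinePoint h '' A := by
  refine Set.insert_sdiff_self_of_notMem ?_
  rintro ⟨s, -, hs⟩
  exact affinePoint_ne_pointAtInfinity h s hs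

lemma ncard_image_affinePoint (h : LinearIndependent K ![t, m]) {A : Submodule F K}
    {n : ℕ} [NeZero n] (hA : finrank F A = n) :
    (affinePoint h '' (A : Set K)).ncard = Nat.card F ^ n := by
  have := FiniteDimensional.of_finrank_pos (hA ▸ NeZero.pos n : 0 < finrank F A)
  rw [Set.ncard_image_of_injective _ (affinePoint_injective h), ← hA]
  exact Module.natCard_eq_pow_finrank

variable [Module F V] [IsScalarTower F K V]

/-- The `F`-subspace `A • t + F • m`. Its linear set is a club with head `t`, whose other points
have affine coordinate in `A`. -/
def clubSubmodule (A : Submodule F K) (t m : V) : Submodule F V :=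
  A.map ((LinearMap.toSpanSingleton K V t).restrictScalars F) ⊔ span F {m}

lemma mem_clubSubmodule {A : Submodule F K} {w : V} :
    w ∈ clubSubmodule A t m ↔ ∃ s ∈ A, ∃ x : F, s • t + x • m = w := by
  simp [clubSubmodule, mem_sup, mem_span_singleton]

lemma linearSet_clubSubmodule (h : LinearIndependent K ![t, m]) {A : Submodule F K}
    (hA : A ≠ ⊥) :
    linearSet K (clubSubmodule A t m) =
      insert (pointAtInfinity h) (affinePoint h '' A) := by
  ext X
  constructor
  · rintro ⟨_, hw, hw0, rfl⟩
    obtain ⟨s, hs, x, rfl⟩ := mem_clubSubmodule.1 hw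
    by_cases hx : x = 0
    · left
      exact (Projectivization.mk_eq_mk_iff' K _ _ _ _).2 ⟨s, by simp [hx]⟩
    · right
      refine ⟨x⁻¹ • s, smul_mem _ _ hs, ?_⟩
      refine (Projectivization.mk_eq_mk_iff' K _ _ _ _).2 ⟨algebraMap F K x⁻¹, ?_⟩
      rw [smul_add, algebraMap_smul, algebraMap_smul, inv_smul_smul₀ hx, smul_assoc]
  · rintro (rfl | ⟨s, hs, rfl⟩)
    · obtain ⟨a, ha, ha0⟩ := A.ne_bot_iff.1 hA
      exact mk_mem_linearSet_of_smul_mem _ ha0 (mem_clubSubmodule.2 ⟨a, ha, 0, by simp⟩)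
    · exact mk_mem_linearSet _ (mem_clubSubmodule.2 ⟨s, hs, 1, by simp⟩)

lemma linearSet_span_smul_smul_add_subset (h : LinearIndependent K ![t, m]) {A : Submodule F K}
    {x y : K} (hx : x ∈ A) (hy : y ∈ A) (hxy : x ≠ y) :
    linearSet K (span F {(y - x) • t, x • t + m}) ⊆
      insert (pointAtInfinity h) (affinePoint h '' A) := by
  have hA : A ≠ ⊥ := A.ne_bot_iff.2 ⟨_, sub_mem hy hx, sub_ne_zero.2 hxy.symm⟩
  rw [← linearSet_clubSubmodule h hA]
  refine linearSet_mono (span_le.2 (Set.pair_subset ?_ ?_))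
  · exact mem_clubSubmodule.2 ⟨_, sub_mem hy hx, 0, by simp⟩
  · exact mem_clubSubmodule.2 ⟨x, hx, 1, by simp⟩

lemma linearSet_span_pair (h : LinearIndependent K ![t, m]) :
    linearSet K (span F {t, m}) = insert (pointAtInfinity h)
      (Set.range fun x : F => affinePoint h (algebraMap F K x)) := by
  have hclub : clubSubmodule (1 : Submodule F K) t m = span F {t, m} := by
    rw [clubSubmodule, one_eq_span, map_span, Set.image_singleton, span_insert]
    simp
  rw [← hclub, linearSet_clubSubmodule h one_ne_zero, Set.range_comp', one_eq_range]
  rfl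

lemma ncard_linearSet_span_pair [Finite F] (h : LinearIndependent K ![t, m]) :
    (linearSet K (span F {t, m})).ncard = Nat.card F + 1 := by
  have hinj : Function.Injective fun x : F => affinePoint h (algebraMap F K x) :=
    (affinePoint_injective h).comp (algebraMap F K).injective
  rw [linearSet_span_pair h, Set.ncard_insert_of_notMem, Set.ncard_range_of_injective hinj]
  rintro ⟨x, hx⟩
  exact affinePoint_ne_pointAtInfinity h _ hx

end AffinePoints

section Subplanes

variable {F K : Type*} [Field F] [Field K] [Algebra F K]

lemma basePlane_eq_linearSet :
    basePlane F K = linearSet K (span F (Set.range (Pi.basisFun K (Fin 3)))) := by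
  ext X
  simp only [basePlane, linearSet, Set.mem_ofPred_eq, Basis.mem_span_iff_repr_mem,
    Pi.basisFun_repr]
  constructor
  · rintro ⟨v, hv, rfl, h⟩
    exact ⟨v, h, hv, rfl⟩
  · rintro ⟨v, h, hv, rfl⟩
    exact ⟨v, hv, rfl, h⟩

lemma hmap_image_linearSet (f : (Fin 3 → K) ≃ₗ[K] (Fin 3 → K)) (U : Submodule F (Fin 3 → K)) :
    hmap f '' linearSet K U = linearSet K (U.map (f.toLinearMap.restrictScalars F)) := by
  ext X
  constructor
  · rintro ⟨_, ⟨w, hw, hw0, rfl⟩, rfl⟩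
    exact ⟨f w, mem_map_of_mem hw, f.map_ne_zero_iff.2 hw0, rfl⟩
  · rintro ⟨_, ⟨w, hw, rfl⟩, hw0, rfl⟩
    exact ⟨_, mk_mem_linearSet (f.map_ne_zero_iff.1 hw0) hw, rfl⟩

lemma isSubplane_iff_exists_basis {S : Set (PGPoint K)} :
    IsSubplane F S ↔
      ∃ b : Basis (Fin 3) K (Fin 3 → K), S = linearSet K (span F (Set.range b)) := by
  have himage (f : (Fin 3 → K) ≃ₗ[K] (Fin 3 → K)) : hmap f '' basePlane F K =
      linearSet K (span F (Set.range ((Pi.basisFun K (Fin 3)).map f))) := by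
    rw [basePlane_eq_linearSet, hmap_image_linearSet, map_span, ← Set.range_comp]
    rfl
  constructor
  · rintro ⟨f, rfl⟩
    exact ⟨_, himage f⟩
  · rintro ⟨b, rfl⟩
    refine ⟨b.equivFun.symm, ?_⟩
    rw [himage]
    congr 3
    ext i : 1
    simp

lemma mk_mem_linf {w : Fin 3 → K} (hw : w ≠ 0) :
    Projectivization.mk K w hw ∈ linf K ↔ w 2 = 0 := by
  obtain ⟨a, ha⟩ := Projectivization.exists_smul_eq_mk_rep K w hw
  simp [linf, ← ha, Units.smul_def]

end Subplanes

section Sublines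

variable {F K : Type*} [Field F] [Field K] [Algebra F K] {u v : Fin 3 → K}

lemma ne_top_of_finrank_eq_two {W : Submodule K (Fin 3 → K)} (hW : finrank K W = 2) : W ≠ ⊤ :=
  (lt_top_of_finrank_lt_finrank (by simp [hW])).ne

lemma isSubline_linearSet_span_pair [Finite F] (h : LinearIndependent K ![u, v]) :
    IsSubline F (Nat.card F) (linearSet K (span F {u, v})) := by
  obtain ⟨b, rfl, rfl, -⟩ :=
    exists_basis_of_linearIndependent_pair (Pi.basisFun K (Fin 3)) h (by simp) (by simp)
  have hW := finrank_span_pair_eq_two h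
  have hinter : linearSet K (span F (Set.range b)) ∩ {P | P.submodule ≤ span K {b 0, b 1}} =
      linearSet K (span F {b 0, b 1}) := by
    rw [linearSet_inter_setOf_submodule_le, span_range_basis_inf_restrictScalars b
      (ne_top_of_finrank_eq_two hW) (mem_span_of_mem (by simp)) (mem_span_of_mem (by simp))]
  exact ⟨_, _, isSubplane_iff_exists_basis.2 ⟨b, rfl⟩, ⟨_, hW, rfl⟩,
    hinter ▸ ncard_linearSet_span_pair h, hinter.symm⟩

lemma IsSubline.exists_eq_linearSet_span_smul_pair {q : ℕ} {s : Set (PGPoint K)}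
    (hs : IsSubline F q s) (h : LinearIndependent K ![u, v])
    (hu : Projectivization.mk K u (h.ne_zero 0) ∈ s)
    (hv : Projectivization.mk K v (h.ne_zero 1) ∈ s) :
    ∃ a c : K, s = linearSet K (span F {a • u, c • v}) := by
  obtain ⟨_, _, hS, ⟨W, hW, rfl⟩, -, rfl⟩ := hs
  obtain ⟨b, rfl⟩ := isSubplane_iff_exists_basis.1 hS
  obtain ⟨a, ha, hau⟩ := exists_smul_mem_of_mk_mem_linearSet hu.1
  obtain ⟨c, hc, hcv⟩ := exists_smul_mem_of_mk_mem_linearSet hv.1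
  have huW : a • u ∈ W := W.smul_mem a <| (mk_submodule_le_iff _).1 hu.2
  have hvW : c • v ∈ W := W.smul_mem c <| (mk_submodule_le_iff _).1 hv.2
  obtain ⟨b', h0, h1, hspan⟩ := exists_basis_of_linearIndependent_pair b
    (((LinearIndependent.pair_smul_smul_iff ha.isUnit hc.isUnit).2 h).restrict_scalars' F) hau hcv
  refine ⟨a, c, ?_⟩
  rw [linearSet_inter_setOf_submodule_le, ← hspan, ← h0, ← h1]
  exact congrArg _ <| span_range_basis_inf_restrictScalars b' (ne_top_of_finrank_eq_two hW)
    (h0 ▸ huW) (h1 ▸ hvW)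

lemma IsSubline.eq_linearSet_span_pair {q : ℕ} {s : Set (PGPoint K)} (hs : IsSubline F q s)
    (h : LinearIndependent K ![u, v]) (huv : u + v ≠ 0)
    (hu : Projectivization.mk K u (h.ne_zero 0) ∈ s)
    (hv : Projectivization.mk K v (h.ne_zero 1) ∈ s)
    (huvs : Projectivization.mk K (u + v) huv ∈ s) :
    s = linearSet K (span F {u, v}) := by
  obtain ⟨a, c, rfl⟩ := hs.exists_eq_linearSet_span_smul_pair h hu hv
  obtain ⟨d, hd, hmem⟩ := exists_smul_mem_of_mk_mem_linearSet huvs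
  obtain ⟨x, y, hxy⟩ := mem_span_pair.1 hmem
  obtain ⟨hx, hy⟩ := h.eq_zero_of_pair
    (s := algebraMap F K x * a - d) (t := algebraMap F K y * c - d) (by
      simp only [← algebraMap_smul K x, ← algebraMap_smul K y] at hxy
      linear_combination (norm := module) hxy)
  have hxu : x • a • u = d • u := by
    rw [← sub_eq_zero.1 hx, mul_smul, algebraMap_smul]
  have hyv : y • c • v = d • v := by
    rw [← sub_eq_zero.1 hy, mul_smul, algebraMap_smul]
  have hx0 : x ≠ 0 := by
    rintro rfl
    simp_all
  have hy0 : y ≠ 0 := by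
    rintro rfl
    simp_all
  have hsmul : d • ({u, v} : Set (Fin 3 → K)) = {d • u, d • v} := by
    rw [Set.smul_set_insert, Set.smul_set_singleton]
  rw [← span_smul_smul_pair hx0 hy0, hxu, hyv, ← hsmul, ← smul_span, linearSet_smul hd]

lemma IsSubline.ncard_sdiff_singleton {q : ℕ} {s : Set (PGPoint K)} (hs : IsSubline F q s)
    {T : PGPoint K} (hT : T ∈ s) : (s \ {T}).ncard = q := by
  obtain ⟨_, _, -, -, hcard, rfl⟩ := hs
  rw [Set.ncard_sdiff_singleton_of_mem hT, hcard, Nat.add_sub_cancel]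

end Sublines

section FrameCoordinates

variable {F K V : Type*} [Field F] [Field K] [Algebra F K] [AddCommGroup V] [Module K V]

lemma linearIndependent_basis_smul_sub_smul (b : Basis (Fin 3) K V) {x y : K}
    (hx : x ≠ 0) : LinearIndependent K ![b 0, x • b 1 - y • b 2] := by
  refine LinearIndependent.pair_iff.2 fun c d hcd => ?_
  have h0 : c = 0 := by simpa using congrArg (b.repr · 0) hcd
  have h1 : d * x = 0 := by simpa using congrArg (b.repr · 1) hcd
  exact ⟨h0, (mul_eq_zero_iff_right hx).1 h1⟩

lemma not_linearIndependent_repr_smul_add_iff (b : Basis (Fin 3) K V) {m : V}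
    (hm0 : b.repr m 0 = 0) (hm : LinearIndependent F ![b.repr m 1, b.repr m 2]) (s : K) :
    ¬ LinearIndependent F (b.repr (s • b 0 + m)) ↔ s ∈ span F {b.repr m 1, b.repr m 2} := by
  have hcoords : ⇑(b.repr (s • b 0 + m)) = Fin.cons s ![b.repr m 1, b.repr m 2] := by
    ext i
    fin_cases i <;> simp [hm0]
  rw [hcoords, linearIndependent_finCons, Matrix.range_cons_cons_empty]
  simp [hm]

variable [Module F V] [IsScalarTower F K V]

lemma not_linearIndependent_repr_of_mem_span_pair (b : Basis (Fin 3) K V) {p r w : V}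
    (hp : p ∈ span F (Set.range b)) (hr : r ∈ span F (Set.range b)) (hw : w ∈ span K {p, r}) :
    ¬ LinearIndependent F (b.repr w) := by
  obtain ⟨α, β, rfl⟩ := mem_span_pair.1 hw
  have hmem (i : Fin 3) : b.repr (α • p + β • r) i ∈ span F {α, β} := by
    obtain ⟨x, hx⟩ := (b.mem_span_iff_repr_mem F p).1 hp i
    obtain ⟨y, hy⟩ := (b.mem_span_iff_repr_mem F r).1 hr i
    exact mem_span_pair.2 ⟨x, y, by simp [← hx, ← hy, Algebra.smul_def, mul_comm]⟩
  intro hli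
  have := FiniteDimensional.span_of_finite F (Set.toFinite {α, β})
  have hle := finrank_mono (span_le.2 <| Set.range_subset_iff.2 hmem)
  rw [finrank_span_eq_card hli, Fintype.card_fin] at hle
  exact absurd (hle.trans (finrank_span_pair_le_two α β)) (by decide)

lemma exists_mem_span_pair_of_not_linearIndependent_repr (b : Basis (Fin 3) K V) {w : V}
    (hw : ¬ LinearIndependent F (b.repr w)) :
    ∃ p ∈ span F (Set.range b), ∃ r ∈ span F (Set.range b),
      LinearIndependent K ![p, r] ∧ w ∈ span K {p, r} := by
  obtain ⟨c, hc, i, hci⟩ := Fintype.not_linearIndependent_iff.1 hw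
  let φ : V →ₗ[K] K := b.constr K fun i => algebraMap F K (c i)
  have hφb (i : Fin 3) : φ (b i) = algebraMap F K (c i) := b.constr_basis K _ i
  have hφ0 : φ ≠ 0 := fun h0 => hci <| by simpa [h0] using (hφb i).symm
  have hφw : w ∈ LinearMap.ker φ := by
    simpa [φ, Basis.constr_apply_fintype, Algebra.smul_def, mul_comm] using hc
  have hker : finrank K (LinearMap.ker φ) = 2 := by
    have := b.finiteDimensional_of_finite
    have hadd := Dual.finrank_ker_add_one_of_ne_zero hφ0
    rw [finrank_eq_card_basis b, Fintype.card_fin] at hadd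
    omega
  have hU := one_lt_finrank_span_range_basis_inf_ker b fun i => ⟨c i, (hφb i).symm⟩
  have := nontrivial_of_finrank_pos (pos_of_gt hU)
  obtain ⟨⟨p, hpU, hpφ⟩, hp0⟩ := exists_ne
    (0 : ↥(span F (Set.range b) ⊓ (LinearMap.ker φ).restrictScalars F))
  obtain ⟨r, ⟨hrU, hrφ⟩, hpr⟩ := exists_mem_linearIndependent_pair hU ⟨hpU, hpφ⟩
    fun h0 => hp0 (Subtype.ext h0)
  have hprK := linearIndependent_pair_of_mem_span_range_basis b hpr hpU hrU
  exact ⟨p, hpU, r, hrU, hprK, span_pair_eq_of_finrank_eq_two hker hprK hpφ hrφ ▸ hφw⟩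

end FrameCoordinates

section TangentSplashes

variable {F K : Type*} [Field F] [Field K] [Algebra F K]

lemma mk_mem_splash_iff (b : Basis (Fin 3) K (Fin 3 → K)) {w : Fin 3 → K} (hw : w ≠ 0) :
    Projectivization.mk K w hw ∈ splash (linearSet K (span F (Set.range b))) ↔
      w 2 = 0 ∧ ¬ LinearIndependent F (b.repr w) := by
  rw [← mk_mem_linf hw]
  refine and_congr_right fun _ => ⟨?_, fun h => ?_⟩
  · rintro ⟨_, _, ⟨p, hp, hp0, rfl⟩, ⟨r, hr, hr0, rfl⟩, hne, _, ⟨W, hW, rfl⟩, hpW, hrW, hwW⟩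
    refine not_linearIndependent_repr_of_mem_span_pair b hp hr ?_
    rw [span_pair_eq_of_finrank_eq_two hW ((linearIndependent_pair_iff_mk_ne_mk hp0 hr0).2 hne)
      ((mk_submodule_le_iff hp0).1 hpW) ((mk_submodule_le_iff hr0).1 hrW)]
    exact (mk_submodule_le_iff hw).1 hwW
  · obtain ⟨p, hp, r, hr, hpr, hwpr⟩ := exists_mem_span_pair_of_not_linearIndependent_repr b h
    refine ⟨_, _, mk_mem_linearSet (hpr.ne_zero 0) hp, mk_mem_linearSet (hpr.ne_zero 1) hr,
      (linearIndependent_pair_iff_mk_ne_mk _ _).1 hpr, _, ⟨_, finrank_span_pair_eq_two hpr, rfl⟩,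
      (mk_submodule_le_iff _).2 (mem_span_of_mem ?_),
      (mk_submodule_le_iff _).2 (mem_span_of_mem ?_), (mk_submodule_le_iff hw).2 hwpr⟩
    · simp
    · simp

lemma linf_eq_linearSet_ker_proj :
    linf K = linearSet K (LinearMap.ker (LinearMap.proj 2 : Dual K (Fin 3 → K))) := by
  ext X
  constructor
  · intro hX
    exact ⟨X.rep, hX, X.rep_nonzero, X.mk_rep⟩
  · rintro ⟨w, hw, hw0, rfl⟩
    exact (mk_mem_linf hw0).2 hw

lemma linf_eq_insert_range_affinePoint {t m : Fin 3 → K} (h : LinearIndependent K ![t, m])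
    (ht : t 2 = 0) (hm : m 2 = 0) :
    linf K = insert (pointAtInfinity h) (Set.range (affinePoint h)) := by
  have hproj : (LinearMap.proj 2 : Dual K (Fin 3 → K)) ≠ 0 := fun h0 => by
    simpa using LinearMap.congr_fun h0 1
  have hker : finrank K (LinearMap.ker (LinearMap.proj 2 : Dual K (Fin 3 → K))) = 2 := by
    simpa using Dual.finrank_ker_add_one_of_ne_zero hproj
  rw [linf_eq_linearSet_ker_proj, ← span_pair_eq_of_finrank_eq_two hker h ht hm,
    linearSet_span_pair h]
  rfl

lemma exists_tangent_basis {π : Set (PGPoint K)} {T : PGPoint K} (hπ : IsSubplane F π)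
    (hT : π ∩ linf K = {T}) :
    ∃ b : Basis (Fin 3) K (Fin 3 → K), π = linearSet K (span F (Set.range b)) ∧
      T = Projectivization.mk K (b 0) (b.ne_zero 0) ∧ b 0 2 = 0 ∧
      LinearIndependent F ![b 1 2, b 2 2] := by
  obtain ⟨b₀, rfl⟩ := isSubplane_iff_exists_basis.1 hπ
  have hTmem : T ∈ linearSet K (span F (Set.range b₀)) ∩ linf K := hT ▸ rfl
  obtain ⟨⟨t, ht, ht0, rfl⟩, htinf⟩ := hTmem
  obtain ⟨b, rfl, hspan⟩ := exists_basis_of_ne_zero b₀ ht0 ht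
  refine ⟨b, by rw [hspan], rfl, (mk_mem_linf ht0).1 htinf, LinearIndependent.pair_iff.2 ?_⟩
  intro x y hxy
  have hv : x • b 1 + y • b 2 = 0 := by
    by_contra hv
    have hmem : Projectivization.mk K _ hv ∈ linearSet K (span F (Set.range b₀)) ∩ linf K := by
      refine ⟨mk_mem_linearSet hv ?_, (mk_mem_linf hv).2 hxy⟩
      rw [← hspan]
      exact add_mem (smul_mem _ _ (subset_span ⟨1, rfl⟩)) (smul_mem _ _ (subset_span ⟨2, rfl⟩))
    rw [hT] at hmem
    obtain ⟨a, ha⟩ := (Projectivization.mk_eq_mk_iff' K _ _ _ _).1 hmem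
    have ha0 : a = 0 := by
      rw [← algebraMap_smul K x, ← algebraMap_smul K y] at ha
      simpa [-algebraMap_smul] using congrArg (b.repr · 0) ha
    exact hv (by rw [← ha, ha0, zero_smul])
  exact ((linearIndependent_basis_pair b (by decide : (1 : Fin 3) ≠ 2)).restrict_scalars' F
    ).eq_zero_of_pair hv

lemma splash_eq_insert_image_affinePoint (b : Basis (Fin 3) K (Fin 3 → K)) {m : Fin 3 → K}
    (h : LinearIndependent K ![b 0, m]) (hb : b 0 2 = 0) (hm : m 2 = 0) (hm0 : b.repr m 0 = 0)
    (hli : LinearIndependent F ![b.repr m 1, b.repr m 2]) :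
    splash (linearSet K (span F (Set.range b))) = insert (pointAtInfinity h)
      (affinePoint h '' (span F {b.repr m 1, b.repr m 2} : Submodule F K)) := by
  have hinfty : pointAtInfinity h ∈ splash (linearSet K (span F (Set.range b))) := by
    have h0 : b 0 ∈ span F (Set.range b) := subset_span ⟨0, rfl⟩
    exact (mk_mem_splash_iff b _).2
      ⟨hb, not_linearIndependent_repr_of_mem_span_pair b h0 h0 (mem_span_of_mem (by simp))⟩
  have haffine (s : K) : affinePoint h s ∈ splash (linearSet K (span F (Set.range b))) ↔
      s ∈ span F {b.repr m 1, b.repr m 2} := by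
    rw [affinePoint, mk_mem_splash_iff, not_linearIndependent_repr_smul_add_iff b hm0 hli]
    simp [hb, hm]
  apply Set.Subset.antisymm
  · intro X hX
    have hXinf : X ∈ linf K := hX.1
    rw [linf_eq_insert_range_affinePoint h hb hm] at hXinf
    obtain rfl | ⟨s, rfl⟩ := hXinf
    · exact Set.mem_insert _ _
    · exact Set.mem_insert_of_mem _ ⟨s, (haffine s).1 hX, rfl⟩
  · rintro _ (rfl | ⟨s, hs, rfl⟩)
    · exact hinfty
    · exact (haffine s).2 hs

lemma IsTangentSplash.exists_eq_insert_image_affinePoint {S : Set (PGPoint K)} {T : PGPoint K}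
    (hS : IsTangentSplash F S T) :
    ∃ (t m : Fin 3 → K) (h : LinearIndependent K ![t, m]) (A : Submodule F K),
      t 2 = 0 ∧ m 2 = 0 ∧ finrank F A = 2 ∧ T = pointAtInfinity h ∧
      S = insert T (affinePoint h '' A) := by
  obtain ⟨π, hπ, hT, rfl⟩ := hS
  obtain ⟨b, rfl, rfl, ht, hli⟩ := exists_tangent_basis hπ hT
  set m := b 2 2 • b 1 - b 1 2 • b 2 with hm_def
  have hm : m 2 = 0 := by simp [hm_def, mul_comm]
  have hm0 : b.repr m 0 = 0 := by simp [hm_def]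
  have hcoords : ![b.repr m 1, b.repr m 2] = ![b 2 2, -b 1 2] := by simp [hm_def]
  have hmli : LinearIndependent F ![b.repr m 1, b.repr m 2] := by
    rwa [hcoords, LinearIndependent.pair_neg_right_iff, LinearIndependent.pair_symm_iff]
  have h : LinearIndependent K ![b 0, m] := linearIndependent_basis_smul_sub_smul b (hli.ne_zero 1)
  exact ⟨b 0, m, h, _, ht, hm, finrank_span_pair_eq_two hmli, rfl,
    splash_eq_insert_image_affinePoint b h ht hm hm0 hmli⟩

lemma existsUnique_isSubline_of_mem_image_affinePoint [Finite F] {t m : Fin 3 → K}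
    (h : LinearIndependent K ![t, m]) (ht : t 2 = 0) (hm : m 2 = 0) (A : Submodule F K)
    {P Q : PGPoint K} (hP : P ∈ affinePoint h '' A) (hQ : Q ∈ affinePoint h '' A) (hPQ : P ≠ Q) :
    ∃! s : Set (PGPoint K), IsSubline F (Nat.card F) s ∧ s ⊆ linf K ∧ pointAtInfinity h ∈ s ∧
      s ⊆ insert (pointAtInfinity h) (affinePoint h '' A) ∧ P ∈ s ∧ Q ∈ s := by
  obtain ⟨x, hx, rfl⟩ := hP
  obtain ⟨y, hy, rfl⟩ := hQ
  have hxy : x ≠ y := fun hxy => hPQ (by rw [hxy])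
  set u := (y - x) • t
  set v := x • t + m
  have hli : LinearIndependent K ![u, v] :=
    linearIndependent_smul_smul_add_pair (sub_ne_zero.2 hxy.symm) x h
  have huv : u + v = y • t + m := by linear_combination (norm := module)
  have huv0 : u + v ≠ 0 := huv ▸ smul_add_ne_zero h y
  have hmk_u : Projectivization.mk K u (hli.ne_zero 0) = pointAtInfinity h :=
    (Projectivization.mk_eq_mk_iff' K _ _ _ _).2 ⟨_, rfl⟩
  have hmk_add : Projectivization.mk K (u + v) huv0 = affinePoint h y := by
    simp only [huv, affinePoint]
  have hu_mem : u ∈ span F {u, v} := mem_span_of_mem (by simp)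
  have hv_mem : v ∈ span F {u, v} := mem_span_of_mem (by simp)
  have hsub := linearSet_span_smul_smul_add_subset h hx hy hxy
  have hlinf : linearSet K (span F {u, v}) ⊆ linf K := by
    rw [linf_eq_insert_range_affinePoint h ht hm]
    exact hsub.trans (Set.insert_subset_insert (Set.image_subset_range _ _))
  refine ⟨linearSet K (span F {u, v}), ⟨isSubline_linearSet_span_pair hli, hlinf,
    hmk_u ▸ mk_mem_linearSet _ hu_mem, hsub, mk_mem_linearSet _ hv_mem,
    hmk_add ▸ mk_mem_linearSet _ (add_mem hu_mem hv_mem)⟩, ?_⟩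
  rintro s ⟨hs, -, hinfty, -, hP, hQ⟩
  exact hs.eq_linearSet_span_pair hli huv0 (hmk_u ▸ hinfty) hP (hmk_add ▸ hQ)

end TangentSplashes

theorem statement3_general {q : ℕ} {F K : Type*} [Field F] [Field K] [Finite F] [Algebra F K]
    (hF : Nat.card F = q) {S : Set (PGPoint K)} {T : PGPoint K} (hS : IsTangentSplash F S T) :
    (S \ {T}).ncard = q ^ 2 ∧
    (∀ b : Set (PGPoint K), IsSubline F q b → b ⊆ linf K → T ∈ b → b ⊆ S →
      (b \ {T}).ncard = q) ∧
    (∀ P Q : PGPoint K, P ∈ S \ {T} → Q ∈ S \ {T} → P ≠ Q →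
      ∃! b : Set (PGPoint K),
        IsSubline F q b ∧ b ⊆ linf K ∧ T ∈ b ∧ b ⊆ S ∧ P ∈ b ∧ Q ∈ b) := by
  subst hF
  obtain ⟨t, m, h, A, ht, hm, hA, rfl, rfl⟩ := hS.exists_eq_insert_image_affinePoint
  rw [insert_image_affinePoint_sdiff_singleton]
  exact ⟨ncard_image_affinePoint h hA, fun b hb _ hT _ => hb.ncard_sdiff_singleton hT,
    fun P Q hP hQ => existsUnique_isSubline_of_mem_image_affinePoint h ht hm A hP hQ⟩

/-- the points of `S \ {T}` together with the order-`q`-sublines of `ℓ∞`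
through `T` contained in a tangent splash `S` form a 2-(q², q, 1) design (an affine
plane of order `q`): there are `q²` points, each line has `q` points distinct from `T`,
and two distinct points lie on exactly one line. -/
theorem statement3 (q : ℕ) (F K : Type) [Field F] [Field K] [Fintype F] [Fintype K]
    [Algebra F K] (hF : Fintype.card F = q) (hK : Fintype.card K = q ^ 3)
    (S : Set (PGPoint K)) (T : PGPoint K) (hS : IsTangentSplash F S T) :
    (S \ {T}).ncard = q ^ 2 ∧
    (∀ b : Set (PGPoint K), IsSubline F q b → b ⊆ linf K → T ∈ b → b ⊆ S →
      (b \ {T}).ncard = q) ∧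
    (∀ P Q : PGPoint K, P ∈ S \ {T} → Q ∈ S \ {T} → P ≠ Q →
      ∃! b : Set (PGPoint K),
        IsSubline F q b ∧ b ⊆ linf K ∧ T ∈ b ∧ b ⊆ S ∧ P ∈ b ∧ Q ∈ b) := by
  exact statement3_general (Nat.card_eq_fintype_card.trans hF) hS

end TangentSplashPaper
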